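/- arXiv:2605.11522 — 3 statements merged into one kernel-verified Lean document; each statement's English description precedes it below -/
import Mathlib

section
/- (State Twin Fidelity.) Fix positive initial reserves and a common input sequence (δ_1, …, δ_n) of positive integers. Let the twin trajectory evolve under the fee-free real-valued constant-product update r0' = r0 + δ, r1' = r1 − (δ·r1)/(r0 + δ) starting from the real embedding of the initial integer reserves, and let the on-chain trajectory evolve under the fee-free discretized update r0' = r0 + δ, r1' = ⌊(r0·r1)/r0'⌋ on the integer reserves, both driven by the same inputs. If the on-chain post-swap reserve satisfies r0^(j) ≤ B for all 1 ≤ j ≤ n, then the constant-product observable h_K(x) = r0 · r1 satisfies |h_K(twin state at step n) − h_K(on-chain state at step n)| ≤ n · B. -/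
/-!
The real update preserves the product `a * b` exactly, so the twin's observable stays at its
initial value `x 0 * y 0`. Each floor division lowers the on-chain product by a remainder
modulo the post-swap reserve `x j`, hence by at most `x j ≤ B`. Summing over the steps, the
on-chain product after `k` steps lies in `[x 0 * y 0 - k * B, x 0 * y 0]`.
-/

/-- State Twin Fidelity: a real-valued twin trajectory and the discretized
on-chain trajectory, started from the same integer reserves and driven by
the same positive integer inputs, have constant-product observables within
`n·B` of each other after `n` steps, provided the on-chain post-swap
input-side reserve is bounded by `B` throughout. -/
theorem stmt_4 (n : ℕ) (δ : ℕ → ℕ) (B : ℕ)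
    (a b : ℕ → ℝ)            -- twin trajectory (real arithmetic)
    (x y : ℕ → ℕ)            -- on-chain trajectory (integer arithmetic)
    (hx0 : 0 < x 0) (hy0 : 0 < y 0)
    (ha0 : a 0 = (x 0 : ℝ)) (hb0 : b 0 = (y 0 : ℝ))
    (hδ : ∀ j, 1 ≤ j → j ≤ n → 0 < δ j)
    (ha : ∀ j, 1 ≤ j → j ≤ n → a j = a (j - 1) + (δ j : ℝ))
    (hb : ∀ j, 1 ≤ j → j ≤ n →
      b j = b (j - 1) - ((δ j : ℝ) * b (j - 1)) / (a (j - 1) + (δ j : ℝ)))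
    (hx : ∀ j, 1 ≤ j → j ≤ n → x j = x (j - 1) + δ j)
    (hy : ∀ j, 1 ≤ j → j ≤ n → y j = (x (j - 1) * y (j - 1)) / x j)
    (hB : ∀ j, 1 ≤ j → j ≤ n → x j ≤ B) :
    |a n * b n - ((x n * y n : ℕ) : ℝ)| ≤ (n : ℝ) * (B : ℝ) := by
  have twin : ∀ k, k ≤ n → 0 < a k ∧ a k * b k = ((x 0 * y 0 : ℕ) : ℝ) := by
    intro k
    induction k with
    | zero =>
      intro _
      refine ⟨by rw [ha0]; exact_mod_cast hx0, ?_⟩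
      rw [ha0, hb0]
      push_cast
      ring
    | succ k ih =>
      intro hk
      obtain ⟨hpos, hprod⟩ := ih (by omega)
      have h1 := ha (k + 1) (by omega) hk
      have h2 := hb (k + 1) (by omega) hk
      simp only [Nat.add_sub_cancel] at h1 h2
      have hden : 0 < a k + (δ (k + 1) : ℝ) := by positivity
      refine ⟨by rw [h1]; exact hden, ?_⟩
      rw [← hprod, h1, h2]
      field_simp
      ring
  have chain : ∀ k, k ≤ n → 0 < x k ∧ x k * y k ≤ x 0 * y 0 ∧
      x 0 * y 0 ≤ x k * y k + k * B := by
    intro k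
    induction k with
    | zero =>
      intro _
      exact ⟨hx0, le_rfl, by simp⟩
    | succ k ih =>
      intro hk
      obtain ⟨hpos, hle, hge⟩ := ih (by omega)
      have h1 := hx (k + 1) (by omega) hk
      have h2 := hy (k + 1) (by omega) hk
      have h3 := hB (k + 1) (by omega) hk
      simp only [Nat.add_sub_cancel] at h1 h2
      have hpos' : 0 < x (k + 1) := by omega
      -- The loss in the product is the remainder of the floor division.
      have hdiv := Nat.div_add_mod (x k * y k) (x (k + 1))
      have hmod := Nat.mod_lt (x k * y k) hpos'
      rw [← h2] at hdiv
      refine ⟨hpos', by omega, ?_⟩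
      rw [Nat.succ_mul]
      omega
  obtain ⟨_, hprod⟩ := twin n le_rfl
  obtain ⟨_, hle, hge⟩ := chain n le_rfl
  have hle' : ((x n * y n : ℕ) : ℝ) ≤ ((x 0 * y 0 : ℕ) : ℝ) := by exact_mod_cast hle
  have hge' : ((x 0 * y 0 : ℕ) : ℝ) ≤ ((x n * y n : ℕ) : ℝ) + (n : ℝ) * (B : ℝ) := by
    exact_mod_cast hge
  rw [hprod, abs_of_nonneg (sub_nonneg.mpr hle')]
  linarith
end

section
/- Let real numbers r0 > 0, r1 > 0, Δ ≥ 0 and fee parameter 0 ≤ φ ≤ 1 be given, and define the fee-accruing constant-product swap update r0' = r0 + Δ, r1' = r1 − ((1−φ)·Δ·r1)/(r0 + (1−φ)·Δ). Then r0' · r1' ≥ r0 · r1, i.e., a fee-accruing swap weakly increases the constant-product invariant; moreover the increase is strict whenever φ > 0 and Δ > 0. -/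
/-- A fee-accruing constant-product swap weakly increases the invariant,
strictly so when `φ > 0` and `Δ > 0`. -/
theorem stmt_6 (r0 r1 Δ φ : ℝ) (h0 : 0 < r0) (h1 : 0 < r1) (hΔ : 0 ≤ Δ)
    (hφ0 : 0 ≤ φ) (hφ1 : φ ≤ 1) :
    (r0 + Δ) * (r1 - ((1 - φ) * Δ * r1) / (r0 + (1 - φ) * Δ)) ≥ r0 * r1 ∧
    (0 < φ → 0 < Δ →
      (r0 + Δ) * (r1 - ((1 - φ) * Δ * r1) / (r0 + (1 - φ) * Δ)) > r0 * r1) := by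
  have hD : 0 < r0 + (1 - φ) * Δ :=
    add_pos_of_pos_of_nonneg h0 (mul_nonneg (sub_nonneg.2 hφ1) hΔ)
  -- The invariant grows by exactly `r0 * r1 * (φ * Δ) / (r0 + (1 - φ) * Δ)`.
  have key : (r0 + Δ) * (r1 - ((1 - φ) * Δ * r1) / (r0 + (1 - φ) * Δ)) =
      r0 * r1 + r0 * r1 * (φ * Δ) / (r0 + (1 - φ) * Δ) := by
    have hne := hD.ne'
    generalize hd : r0 + (1 - φ) * Δ = D at hne ⊢
    field_simp
    subst hd
    ring
  rw [key]
  refine ⟨le_add_of_nonneg_right (by positivity), fun hφ hΔ' => ?_⟩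
  exact lt_add_of_pos_right _ (by positivity)
end

section
/- Let real numbers r0 > 0, r1 > 0, Δ ≥ 0 and fee parameter 0 ≤ φ ≤ 1 be given, and define the fee-accruing constant-product swap update r0' = r0 + Δ, r1' = r1 − ((1−φ)·Δ·r1)/(r0 + (1−φ)·Δ). Then the fee accrual of the step is bounded by r0' · r1' − r0 · r1 ≤ φ · Δ · r1; in particular the per-step upward perturbation of the invariant is controlled by the fee parameter and the trade size. -/
/-- The per-step fee accrual of a fee-accruing constant-product swap is
bounded by `φ·Δ·r1`. -/
theorem stmt_7 (r0 r1 Δ φ : ℝ) (h0 : 0 < r0) (h1 : 0 < r1) (hΔ : 0 ≤ Δ)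
    (hφ0 : 0 ≤ φ) (hφ1 : φ ≤ 1) :
    (r0 + Δ) * (r1 - ((1 - φ) * Δ * r1) / (r0 + (1 - φ) * Δ)) - r0 * r1
      ≤ φ * Δ * r1 := by
  have hc : 0 ≤ 1 - φ := sub_nonneg.mpr hφ1
  have hD : 0 < r0 + (1 - φ) * Δ := by positivity
  -- The accrual is exactly `φ * Δ * r1 * r0 / (r0 + (1 - φ) * Δ)`, so the slack is explicit.
  have key : φ * Δ * r1
      - ((r0 + Δ) * (r1 - ((1 - φ) * Δ * r1) / (r0 + (1 - φ) * Δ)) - r0 * r1)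
      = φ * Δ * r1 * ((1 - φ) * Δ) / (r0 + (1 - φ) * Δ) := by
    field_simp
    ring
  have hslack : 0 ≤ φ * Δ * r1 * ((1 - φ) * Δ) / (r0 + (1 - φ) * Δ) := by positivity
  linarith
end
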